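/- arXiv:1212.4862 — 3 statements merged into one kernel-verified Lean document; each statement's English description precedes it below -/
import Mathlib

section
/- Let 0 ≤ j ≤ d₁−1, fix scalars (λ_u,μ_u) ≠ (0,0) in k² for 0 ≤ u ≤ j, and let (r_i, q_i)_{0 ≤ i ≤ j} be a division system up to level j. Then for every (λ,μ) ≠ (0,0) in k² there exist homogeneous polynomials P, L, H ∈ k[X₀,X₁] of degrees d₁−j−1, j+1 and d₂−d₁+j+1 respectively such that the evaluation of r_j at (P·L, P·H), further evaluated at X₀ = λ, X₁ = μ, is a nonzero element of k. -/
/-!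
Up to nonzero scalars, a division system evaluated at a pair `(F, G)` runs a Euclidean algorithm
on `(F, G)`, so it suffices to run such an algorithm backwards from a prescribed last remainder.

Let `S` be the finite set consisting of `(λ, μ)` and all `(λ_u, μ_u)`. As `k` is infinite, there
is a linear form `M` vanishing nowhere on `S`, and starting from `U_{j+1} = 1`, `U_j = M` one can
choose scalars `c_s` so that `U_s = c_s M U_{s+1} + L_{λ_{s+1},μ_{s+1}}² U_{s+2}` again vanishes
nowhere on `S` (`exists_chain`): at each point of `S`, only one value of `c_s` is excluded.
With `P = M^{d₁-j-1}`, put `T_s = P U_s`, `F = T_0` and `G = L_{λ₀,μ₀}^{d₂-d₁+1} T_1`, that is,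
`L = U_0` and `H = L_{λ₀,μ₀}^{d₂-d₁+1} U_1`.

Each remainder is determined by its defining identity (`remainder_unique`): if two remainders
`R, R'` are possible on division by `T`, then the prime form `L_{λ_i,μ_i}`, which does not divide
`T` because `T(λ_i, μ_i) ≠ 0`, divides the difference of the quotients to the full power, so that
`T` divides `R - R'`, which has smaller degree. By induction, `r_i` evaluated at `(F, G)` is a
nonzero multiple of `T_{i+1}` for all `i ≤ j`, and `T_{j+1} = P` does not vanish at `(λ, μ)`.
-/


open MvPolynomial

noncomputable section

/-- Variables of the ring `A = k[X₀,X₁,f₀,f₁,…,g₀,g₁,…]`. -/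
abbrev Avars : Type := Fin 2 ⊕ ℕ ⊕ ℕ

/-- The weights defining the trigrading of `A` (total degree in the `X`'s, in the `f`'s,
and in the `g`'s). -/
def wA : Avars → ℕ × ℕ × ℕ
  | Sum.inl _ => (1, 0, 0)
  | Sum.inr (Sum.inl _) => (0, 1, 0)
  | Sum.inr (Sum.inr _) => (0, 0, 1)

variable (k : Type) [Field k]

/-- The variable `Xᵢ` of `A`. -/
def XA (i : Fin 2) : MvPolynomial Avars k := X (Sum.inl i)

/-- The variable `f_j` of `A`. -/
def fA (j : ℕ) : MvPolynomial Avars k := X (Sum.inr (Sum.inl j))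

/-- The variable `g_j` of `A`. -/
def gA (j : ℕ) : MvPolynomial Avars k := X (Sum.inr (Sum.inr j))

/-- The generic binary form `f = ∑_{j=0}^{d₁} f_j X₀^{d₁-j} X₁^j`. -/
def fgen (d₁ : ℕ) : MvPolynomial Avars k :=
  ∑ j ∈ Finset.range (d₁ + 1), fA k j * XA k 0 ^ (d₁ - j) * XA k 1 ^ j

/-- The generic binary form `g = ∑_{j=0}^{d₂} g_j X₀^{d₂-j} X₁^j`. -/
def ggen (d₂ : ℕ) : MvPolynomial Avars k :=
  ∑ j ∈ Finset.range (d₂ + 1), gA k j * XA k 0 ^ (d₂ - j) * XA k 1 ^ j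

/-- The linear form `L_{λ,μ} = λ X₁ - μ X₀`. -/
def Lform (lam mu : k) : MvPolynomial Avars k := C lam * XA k 1 - C mu * XA k 0

/-- Substitution `X₀ ↦ λ`, `X₁ ↦ μ`, leaving the `f` and `g` variables unchanged:
this is `a ↦ a(λ,μ)`. -/
def evalXY (lam mu : k) : MvPolynomial Avars k →ₐ[k] MvPolynomial Avars k :=
  aeval (Sum.elim (fun t : Fin 2 => if t = 0 then C lam else C mu)
    (fun j => X (Sum.inr j)))

/-- A division system up to level `j` for the degrees `(d₁, d₂)` and the scalars
`(lam u, mu u)`: a family `(r_i, q_i)_{0 ≤ i ≤ j}` of trihomogeneous elements of `A`, where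
`r_i` has tridegree `(d₁-1-i, d₂-d₁+1+i, 1+i)`, satisfying the identities
`f(λ₀,μ₀)^{d₂-d₁+1}·g = f·q₀ + L_{λ₀,μ₀}^{d₂-d₁+1}·r₀`;
`r₀(λ₁,μ₁)²·f = r₀·q₁ + f(λ₀,μ₀)^{d₂-d₁+1}·L_{λ₁,μ₁}²·r₁` (if `j ≥ 1`); and
`r_{i-1}(λ_i,μ_i)²·r_{i-2} = r_{i-1}·q_i + r_{i-2}(λ_{i-1},μ_{i-1})²·L_{λ_i,μ_i}²·r_i`
for `2 ≤ i ≤ j`. -/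
def IsDivisionSystem (d₁ d₂ : ℕ) (lam mu : ℕ → k) (j : ℕ)
    (r q : ℕ → MvPolynomial Avars k) : Prop :=
  (∀ i ≤ j, IsWeightedHomogeneous wA (r i) (d₁ - 1 - i, d₂ - d₁ + 1 + i, 1 + i)) ∧
  (∀ i ≤ j, ∃ m : ℕ × ℕ × ℕ, IsWeightedHomogeneous wA (q i) m) ∧
  ((evalXY k (lam 0) (mu 0) (fgen k d₁)) ^ (d₂ - d₁ + 1) * ggen k d₂
    = fgen k d₁ * q 0 + Lform k (lam 0) (mu 0) ^ (d₂ - d₁ + 1) * r 0) ∧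
  (1 ≤ j → (evalXY k (lam 1) (mu 1) (r 0)) ^ 2 * fgen k d₁
    = r 0 * q 1 + (evalXY k (lam 0) (mu 0) (fgen k d₁)) ^ (d₂ - d₁ + 1)
        * Lform k (lam 1) (mu 1) ^ 2 * r 1) ∧
  (∀ i, 2 ≤ i → i ≤ j → (evalXY k (lam i) (mu i) (r (i - 1))) ^ 2 * r (i - 2)
    = r (i - 1) * q i + (evalXY k (lam (i - 1)) (mu (i - 1)) (r (i - 2))) ^ 2
        * Lform k (lam i) (mu i) ^ 2 * r i)

/-- Evaluation of an element of `A` at a pair `(F, G)` of binary forms of degrees `d₁` and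
`d₂`: the `k`-algebra map fixing `X₀, X₁` and sending `f_j` (resp. `g_j`) to the coefficient
of `X₀^{d₁-j}X₁^j` in `F` (resp. of `X₀^{d₂-j}X₁^j` in `G`). -/
def evalFG (d₁ d₂ : ℕ) (F G : MvPolynomial (Fin 2) k) :
    MvPolynomial Avars k →ₐ[k] MvPolynomial (Fin 2) k :=
  aeval (Sum.elim (fun t : Fin 2 => X t)
    (Sum.elim
      (fun j => C (coeff (Finsupp.single 0 (d₁ - j) + Finsupp.single 1 j) F))
      (fun j => C (coeff (Finsupp.single 0 (d₂ - j) + Finsupp.single 1 j) G))))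

/-- The value of a binary form at the point `(λ, μ)`. -/
def evalPt (lam mu : k) (P : MvPolynomial (Fin 2) k) : k :=
  eval (fun t : Fin 2 => if t = 0 then lam else mu) P

section Helpers

variable {k}

/-! ### Evaluating elements of `A` at a pair of forms -/

/-- The linear form `λ X₁ - μ X₀` in `k[X₀, X₁]`, which is the image of `Lform` under every
`evalFG`. -/
def linForm (lam mu : k) : MvPolynomial (Fin 2) k := C lam * X 1 - C mu * X 0

lemma evalFG_Lform (d₁ d₂ : ℕ) (F G : MvPolynomial (Fin 2) k) (lam mu : k) :
    evalFG k d₁ d₂ F G (Lform k lam mu) = linForm lam mu := by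
  simp [evalFG, Lform, linForm, XA, algebraMap_eq]

/-- A binary form of degree `d` is recovered from the coefficients used by `evalFG`. -/
lemma sum_coeff_eq {d : ℕ} {F : MvPolynomial (Fin 2) k} (hF : F.IsHomogeneous d) :
    ∑ j ∈ Finset.range (d + 1),
      C (coeff (Finsupp.single 0 (d - j) + Finsupp.single 1 j) F) * X 0 ^ (d - j) * X 1 ^ j
      = F := by
  have hmon : ∀ j, C (coeff (Finsupp.single 0 (d - j) + Finsupp.single 1 j) F)
      * X 0 ^ (d - j) * X 1 ^ j
      = monomial (Finsupp.single (0 : Fin 2) (d - j) + Finsupp.single 1 j)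
        (coeff (Finsupp.single 0 (d - j) + Finsupp.single 1 j) F) := by
    intro j
    rw [X_pow_eq_monomial, X_pow_eq_monomial, C_mul_monomial, monomial_mul]
    simp
  simp only [hmon]
  ext m
  rw [coeff_sum]
  simp only [coeff_monomial]
  by_cases hm : m.degree = d
  · have hm' : m 0 + m 1 = d := by
      rw [← hm, Finsupp.degree_eq_sum, Fin.sum_univ_two]
    have hmeq : Finsupp.single (0 : Fin 2) (d - m 1) + Finsupp.single 1 (m 1) = m := by
      ext t
      fin_cases t
      · simp
        omega
      · simp
    rw [Finset.sum_eq_single (m 1)]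
    · rw [hmeq, if_pos rfl]
    · intro b _ hb
      rw [if_neg]
      rintro rfl
      simp at hb
    · intro h
      simp at h
      omega
  · rw [hF.coeff_eq_zero hm]
    refine Finset.sum_eq_zero fun j hj => if_neg ?_
    rintro rfl
    rw [Finsupp.degree_eq_sum, Fin.sum_univ_two] at hm
    simp at hj hm
    omega

lemma evalFG_fgen {d₁ : ℕ} (d₂ : ℕ) {F : MvPolynomial (Fin 2) k} (G : MvPolynomial (Fin 2) k)
    (hF : F.IsHomogeneous d₁) : evalFG k d₁ d₂ F G (fgen k d₁) = F := by
  conv_rhs => rw [← sum_coeff_eq hF]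
  simp [evalFG, fgen, fA, XA]

lemma evalFG_ggen (d₁ : ℕ) {d₂ : ℕ} (F : MvPolynomial (Fin 2) k) {G : MvPolynomial (Fin 2) k}
    (hG : G.IsHomogeneous d₂) : evalFG k d₁ d₂ F G (ggen k d₂) = G := by
  conv_rhs => rw [← sum_coeff_eq hG]
  simp [evalFG, ggen, gA, XA]

/-- Evaluating first at a point `(λ, μ)` and then at `(F, G)` gives the constant obtained by
evaluating in the opposite order. -/
lemma evalFG_evalXY (d₁ d₂ : ℕ) (F G : MvPolynomial (Fin 2) k) (lam mu : k)
    (a : MvPolynomial Avars k) :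
    evalFG k d₁ d₂ F G (evalXY k lam mu a) = C (evalPt k lam mu (evalFG k d₁ d₂ F G a)) := by
  have h : ((evalFG k d₁ d₂ F G).comp (evalXY k lam mu)).toRingHom =
      (C.comp (eval (fun t : Fin 2 => if t = 0 then lam else mu))).comp
        (evalFG k d₁ d₂ F G).toRingHom := by
    apply MvPolynomial.ringHom_ext
    · intro c
      simp [evalFG, evalXY, algebraMap_eq]
    · rintro (t | t | t)
      · fin_cases t <;> simp [evalFG, evalXY, algebraMap_eq]
      · simp [evalFG, evalXY]
      · simp [evalFG, evalXY]
  exact congrArg (fun φ => φ a) h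

/-- `evalFG` sends trihomogeneous elements to forms whose degree is the degree in the `X`'s. -/
lemma evalFG_isHomogeneous (d₁ d₂ : ℕ) (F G : MvPolynomial (Fin 2) k)
    {a : MvPolynomial Avars k} {m : ℕ × ℕ × ℕ} (ha : IsWeightedHomogeneous wA a m) :
    (evalFG k d₁ d₂ F G a).IsHomogeneous m.1 := by
  rw [evalFG, aeval_def, eval₂_eq]
  refine IsHomogeneous.sum _ _ _ fun e he => ?_
  have hw := ha (mem_support_iff.mp he)
  have hdeg : m.1 = 0 + ∑ i ∈ e.support, (wA i).1 * e i := by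
    rw [← hw, Finsupp.weight_apply, Finsupp.sum, Prod.fst_sum, zero_add]
    refine Finset.sum_congr rfl fun i _ => ?_
    simp [mul_comm]
  rw [hdeg]
  refine IsHomogeneous.mul (isHomogeneous_C _ _) (IsHomogeneous.prod _ _ _ fun i _ => ?_)
  refine IsHomogeneous.pow ?_ _
  rcases i with t | t | t
  · exact isHomogeneous_X _ _
  · exact isHomogeneous_C _ _
  · exact isHomogeneous_C _ _

/-! ### Linear forms and uniqueness of remainders -/

lemma linForm_isHomogeneous (lam mu : k) : (linForm lam mu).IsHomogeneous 1 :=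
  (isHomogeneous_C_mul_X _ _).sub (isHomogeneous_C_mul_X _ _)

lemma evalPt_linForm (lam mu : k) : evalPt k lam mu (linForm lam mu) = 0 := by
  simp [evalPt, linForm, mul_comm]

lemma linForm_ne_zero {lam mu : k} (h : (lam, mu) ≠ (0, 0)) : linForm lam mu ≠ 0 := by
  intro h0
  have h1 := congrArg (evalPt k 0 1) h0
  have h2 := congrArg (evalPt k 1 0) h0
  simp [evalPt, linForm] at h1 h2
  exact h (by simp [h1, h2])

lemma linForm_prime {lam mu : k} (h : (lam, mu) ≠ (0, 0)) : Prime (linForm lam mu) := by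
  refine Irreducible.prime (irreducible_of_totalDegree_eq_one
    ((linForm_isHomogeneous lam mu).totalDegree (linForm_ne_zero h)) fun x hx => ?_)
  rw [isUnit_iff_ne_zero]
  rintro rfl
  refine linForm_ne_zero h (MvPolynomial.ext _ _ fun i => ?_)
  simpa using hx i

/-- The uniqueness of the remainder in one division step, for which the degree of the quotient
need not be known. -/
lemma remainder_unique {lam mu : k} (h : (lam, mu) ≠ (0, 0)) {T Z Y : MvPolynomial (Fin 2) k}
    {m n : ℕ} (hT : T.IsHomogeneous (n + 1)) (hTp : evalPt k lam mu T ≠ 0)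
    (hY : Y.IsHomogeneous n) (hZY : T * Z = linForm lam mu ^ m * Y) : Y = 0 := by
  have hnd : ¬ linForm lam mu ∣ T := by
    rintro ⟨W, rfl⟩
    apply hTp
    have := evalPt_linForm lam mu
    simp only [evalPt, map_mul] at this ⊢
    rw [this, zero_mul]
  obtain ⟨W, rfl⟩ := (linForm_prime h).pow_dvd_of_dvd_mul_left m hnd ⟨Y, hZY⟩
  have hY' : Y = T * W := by
    apply mul_left_cancel₀ (pow_ne_zero m (linForm_ne_zero h))
    rw [← hZY]
    ring
  by_contra hY0
  have hT0 : T ≠ 0 := by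
    rintro rfl
    simp [hY'] at hY0
  have hW0 : W ≠ 0 := by
    rintro rfl
    simp [hY'] at hY0
  have hdeg := totalDegree_mul_of_isDomain hT0 hW0
  rw [← hY', hY.totalDegree hY0, hT.totalDegree hT0] at hdeg
  omega

/-- One division step up to scalars: if `α T'' = b T' Q + β L ^ m R` with `α, β ≠ 0`, and
`T'' = T' N + L ^ m T`, then the remainder `R` is a nonzero multiple of `T`. -/
lemma division_step {lam mu : k} (h : (lam, mu) ≠ (0, 0))
    {T T' T'' N Q R : MvPolynomial (Fin 2) k} {m n : ℕ} {α b β : k}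
    (hα : α ≠ 0) (hβ : β ≠ 0) (hT' : T'.IsHomogeneous (n + 1)) (hTp : evalPt k lam mu T' ≠ 0)
    (hT : T.IsHomogeneous n) (hR : R.IsHomogeneous n)
    (hrec : T'' = T' * N + linForm lam mu ^ m * T)
    (hdiv : C α * T'' = C b * T' * Q + C β * linForm lam mu ^ m * R) :
    ∃ a : k, a ≠ 0 ∧ R = C a * T := by
  have h0 : C β * R - C α * T = 0 := by
    refine remainder_unique (m := m) (Z := C α * N - C b * Q) h hT' hTp
      ((hR.C_mul β).sub (hT.C_mul α)) ?_
    rw [hrec] at hdiv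
    linear_combination hdiv
  refine ⟨β⁻¹ * α, mul_ne_zero (inv_ne_zero hβ) hα, ?_⟩
  have h1 : (C β⁻¹ * C β : MvPolynomial (Fin 2) k) = 1 := by
    rw [← C_mul, inv_mul_cancel₀ hβ, C_1]
  rw [C_mul]
  linear_combination C β⁻¹ * h0 - R * h1

/-- The remainders of an evaluated division system are, up to nonzero scalars, those of any
Euclidean remainder sequence `T` starting at `F = T 0` with `G = L₀ ^ (d₂ - d₁ + 1) * T 1` whose
members avoid the base points of the system. -/
lemma evalFG_remainder {d₁ d₂ j : ℕ} (hj : j + 1 ≤ d₁) {lam mu : ℕ → k}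
    (hlm : ∀ u ≤ j, (lam u, mu u) ≠ (0, 0)) {r q : ℕ → MvPolynomial Avars k}
    (hds : IsDivisionSystem k d₁ d₂ lam mu j r q) {T : ℕ → MvPolynomial (Fin 2) k}
    {F G : MvPolynomial (Fin 2) k} (hF : F = T 0)
    (hG : G = linForm (lam 0) (mu 0) ^ (d₂ - d₁ + 1) * T 1) (hGh : G.IsHomogeneous d₂)
    (hT : ∀ s ≤ j + 1, (T s).IsHomogeneous (d₁ - s))
    (hTu : ∀ s, ∀ u ≤ j, evalPt k (lam u) (mu u) (T s) ≠ 0)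
    (hTrec : ∀ s, s + 1 ≤ j → ∃ N, T s = T (s + 1) * N
      + linForm (lam (s + 1)) (mu (s + 1)) ^ 2 * T (s + 2)) :
    ∀ i ≤ j, ∃ a : k, a ≠ 0 ∧ evalFG k d₁ d₂ F G (r i) = C a * T (i + 1) := by
  obtain ⟨hr, -, h0, h1, h2⟩ := hds
  have hRh : ∀ i ≤ j, (evalFG k d₁ d₂ F G (r i)).IsHomogeneous (d₁ - 1 - i) := fun i hi =>
    evalFG_isHomogeneous d₁ d₂ _ _ (hr i hi)
  have hφf : evalFG k d₁ d₂ F G (fgen k d₁) = T 0 :=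
    (evalFG_fgen d₂ G (hF ▸ hT 0 (by omega))).trans hF
  have hφg : evalFG k d₁ d₂ F G (ggen k d₂) = linForm (lam 0) (mu 0) ^ (d₂ - d₁ + 1) * T 1 :=
    (evalFG_ggen d₁ F hGh).trans hG
  have hφL := evalFG_Lform d₁ d₂ F G
  have hφE := evalFG_evalXY d₁ d₂ F G
  generalize evalFG k d₁ d₂ F G = φ at *
  have hsc : ∀ (a : k) (s : ℕ), a ≠ 0 → ∀ u ≤ j, evalPt k (lam u) (mu u) (C a * T s) ≠ 0 := by
    intro a s ha u hu
    have := mul_ne_zero ha (hTu s u hu)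
    simpa only [evalPt, map_mul, eval_C] using this
  intro i
  induction i using Nat.strong_induction_on with
  | _ i ih =>
    intro hi
    rcases i with _ | _ | i
    · -- The quotient of `G = L₀ ^ (d₂ - d₁ + 1) * T₁` by `F = T₀` is zero.
      have e := congrArg φ h0
      simp only [map_mul, map_add, map_pow, hφf, hφg, hφL, hφE] at e
      refine division_step (hlm 0 hi) (m := d₂ - d₁ + 1) (n := d₁ - 1)
        (T'' := linForm (lam 0) (mu 0) ^ (d₂ - d₁ + 1) * T 1) (T' := T 0) (T := T 1)
        (R := φ (r 0)) (N := 0) (b := 1) (β := 1) (Q := φ (q 0))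
        (α := evalPt k (lam 0) (mu 0) (T 0) ^ (d₂ - d₁ + 1))
        (pow_ne_zero _ (hTu 0 0 hi))
        one_ne_zero ?_ (hTu 0 0 hi) (hT 1 (by omega)) (hRh 0 hi) (by ring) ?_
      · rw [show d₁ - 1 + 1 = d₁ by omega]
        exact hT 0 (by omega)
      · simp only [map_pow, map_one, one_mul]
        exact e
    · obtain ⟨a, ha, hra⟩ := ih 0 (by omega) (by omega)
      obtain ⟨N, hN⟩ := hTrec 0 (by omega)
      have e := congrArg φ (h1 hi)
      simp only [map_mul, map_add, map_pow, hφf, hφL, hφE, hra] at e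
      refine division_step (hlm 1 hi) (m := 2) (n := d₁ - 2) (T'' := T 0) (T' := T 1) (T := T 2)
        (R := φ (r 1)) (N := N) (b := a)
        (α := evalPt k (lam 1) (mu 1) (C a * T 1) ^ 2)
        (β := evalPt k (lam 0) (mu 0) (T 0) ^ (d₂ - d₁ + 1)) (Q := φ (q 1))
        (pow_ne_zero _ (hsc a 1 ha 1 hi)) (pow_ne_zero _ (hTu 0 0 (by omega)))
        ?_ (hTu 1 1 hi) (hT 2 (by omega)) ?_ hN ?_
      · have := hT 1 (by omega)
        rwa [show d₁ - 1 = d₁ - 2 + 1 by omega] at this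
      · have := hRh 1 hi
        rwa [show d₁ - 1 - 1 = d₁ - 2 by omega] at this
      · simp only [map_pow]
        exact e
    · obtain ⟨a, ha, hra⟩ := ih (i + 1) (by omega) (by omega)
      obtain ⟨b, hb, hrb⟩ := ih i (by omega) (by omega)
      obtain ⟨N, hN⟩ := hTrec (i + 1) (by omega)
      have e := congrArg φ (h2 (i + 2) (by omega) hi)
      simp only [show i + 2 - 1 = i + 1 by omega, show i + 2 - 2 = i by omega,
        map_mul, map_add, map_pow, hφL, hφE, hra, hrb] at e
      refine division_step (hlm (i + 2) hi) (m := 2) (n := d₁ - (i + 3)) (T'' := T (i + 1))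
        (T' := T (i + 2)) (T := T (i + 3)) (R := φ (r (i + 2))) (N := N) (b := a)
        (α := evalPt k (lam (i + 2)) (mu (i + 2)) (C a * (T (i + 2))) ^ 2 * b)
        (β := evalPt k (lam (i + 1)) (mu (i + 1)) (C b * (T (i + 1))) ^ 2)
        (Q := φ (q (i + 2)))
        (mul_ne_zero (pow_ne_zero _ (hsc a _ ha _ hi)) hb)
        (pow_ne_zero _ (hsc b _ hb _ (by omega)))
        ?_ (hTu (i + 2) (i + 2) hi) (hT (i + 3) (by omega)) ?_ hN ?_
      · have := hT (i + 2) (by omega)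
        rwa [show d₁ - (i + 2) = d₁ - (i + 3) + 1 by omega] at this
      · have := hRh (i + 2) hi
        rwa [show d₁ - 1 - (i + 2) = d₁ - (i + 3) by omega] at this
      · simp only [map_pow, map_mul]
        linear_combination e

/-! ### The backward Euclidean algorithm -/

/-- For each `i`, the condition excludes at most one value of `t`. -/
lemma exists_avoid [Infinite k] {ι : Type*} (S : Finset ι) (a b : ι → k)
    (h : ∀ i ∈ S, a i ≠ 0 ∨ b i ≠ 0) : ∃ t : k, ∀ i ∈ S, a i + t * b i ≠ 0 := by
  have hfin : (⋃ i ∈ S, {t : k | a i + t * b i = 0}).Finite := by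
    refine S.finite_toSet.biUnion fun i hi => Set.Subsingleton.finite fun t ht u hu => ?_
    simp only [Set.mem_ofPred_eq] at ht hu
    have hb : b i ≠ 0 := by
      intro hb
      rcases h i hi with ha | hb'
      · simp [hb] at ht
        exact ha ht
      · exact hb' hb
    apply mul_right_cancel₀ hb
    linear_combination ht - hu
  obtain ⟨t, ht⟩ := hfin.exists_notMem
  refine ⟨t, fun i hi h0 => ht ?_⟩
  simp only [Set.mem_iUnion]
  exact ⟨i, hi, h0⟩

/-- A linear form vanishing at none of finitely many points. -/
lemma exists_linear [Infinite k] (S : Finset (k × k)) (hS : ∀ s ∈ S, s ≠ (0, 0)) :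
    ∃ M : MvPolynomial (Fin 2) k, M.IsHomogeneous 1 ∧ ∀ s ∈ S, evalPt k s.1 s.2 M ≠ 0 := by
  obtain ⟨t, ht⟩ := exists_avoid S Prod.fst Prod.snd (fun s hs => by
    by_contra! h
    exact hS s hs (Prod.ext h.1 h.2))
  refine ⟨X 0 + C t * X 1, (isHomogeneous_X _ _).add (isHomogeneous_C_mul_X _ _), ?_⟩
  intro s hs
  simpa [evalPt] using ht s hs

/-- The cofactors `U_0, …, U_{j+1} = 1` of a Euclidean remainder sequence all of whose members
avoid the points of `S`. -/
lemma exists_chain [Infinite k] (S : Finset (k × k)) (lam mu : ℕ → k)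
    {M : MvPolynomial (Fin 2) k} (hM : M.IsHomogeneous 1)
    (hMS : ∀ s ∈ S, evalPt k s.1 s.2 M ≠ 0) (j : ℕ) :
    ∃ U : ℕ → MvPolynomial (Fin 2) k,
      (∀ s ≤ j + 1, (U s).IsHomogeneous (j + 1 - s)) ∧
      (∀ s, ∀ p ∈ S, evalPt k p.1 p.2 (U s) ≠ 0) ∧
      ∀ s, s + 1 ≤ j → ∃ N, U s = U (s + 1) * N + linForm (lam (s + 1)) (mu (s + 1)) ^ 2
        * U (s + 2) := by
  have hstep : ∀ (A B : MvPolynomial (Fin 2) k) (n : ℕ), ∃ c : k,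
      (∀ p ∈ S, evalPt k p.1 p.2 B ≠ 0) →
      ∀ p ∈ S, evalPt k p.1 p.2 (B * (C c * M) + linForm (lam n) (mu n) ^ 2 * A) ≠ 0 := by
    intro A B n
    by_cases hB : ∀ p ∈ S, evalPt k p.1 p.2 B ≠ 0
    · obtain ⟨c, hc⟩ := exists_avoid S
        (fun p => evalPt k p.1 p.2 (linForm (lam n) (mu n) ^ 2 * A))
        (fun p => evalPt k p.1 p.2 (B * M))
        (fun p hp => Or.inr (by
          have := mul_ne_zero (hB p hp) (hMS p hp)
          simpa only [evalPt, map_mul] using this))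
      refine ⟨c, fun _ p hp => ?_⟩
      convert hc p hp using 1
      simp only [evalPt, map_mul, map_add, eval_C]
      ring
    · exact ⟨0, fun h => absurd h hB⟩
  choose c hc using hstep
  -- The sequence is built from its end, as `V n = U (j + 1 - n)`, keeping two successive terms.
  let V : ℕ → MvPolynomial (Fin 2) k × MvPolynomial (Fin 2) k := fun n => Nat.rec (1, M)
    (fun n AB => (AB.2, AB.2 * (C (c AB.1 AB.2 (j - n)) * M)
      + linForm (lam (j - n)) (mu (j - n)) ^ 2 * AB.1)) n
  have hV1 : ∀ n, (V (n + 1)).1 = (V n).2 := fun n => rfl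
  have hV2 : ∀ n, (V (n + 1)).2 = (V n).2 * (C (c (V n).1 (V n).2 (j - n)) * M)
      + linForm (lam (j - n)) (mu (j - n)) ^ 2 * (V n).1 := fun n => rfl
  have hhom : ∀ n, (V n).1.IsHomogeneous n ∧ (V n).2.IsHomogeneous (n + 1) := by
    intro n
    induction n with
    | zero => exact ⟨isHomogeneous_one _ _, hM⟩
    | succ n ih =>
      refine ⟨ih.2, ?_⟩
      rw [hV2]
      refine (ih.2.mul (hM.C_mul _)).add ?_
      have := ((linForm_isHomogeneous (lam (j - n)) (mu (j - n))).pow 2).mul ih.1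
      rwa [show 1 * 2 + n = n + 1 + 1 by ring] at this
  have hnv : ∀ n, (∀ p ∈ S, evalPt k p.1 p.2 (V n).1 ≠ 0) ∧
      (∀ p ∈ S, evalPt k p.1 p.2 (V n).2 ≠ 0) := by
    intro n
    induction n with
    | zero => exact ⟨fun p _ => by simp [V, evalPt], hMS⟩
    | succ n ih => exact ⟨ih.2, by rw [hV2]; exact hc _ _ _ ih.2⟩
  refine ⟨fun s => (V (j + 1 - s)).1, fun s _ => (hhom _).1, fun s => (hnv _).1, ?_⟩
  intro s hs
  obtain ⟨n, hn⟩ : ∃ n, j = s + 1 + n := ⟨j - (s + 1), by omega⟩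
  refine ⟨C (c (V n).1 (V n).2 (j - n)) * M, ?_⟩
  have e0 : j + 1 - s = n + 1 + 1 := by omega
  have e1 : j + 1 - (s + 1) = n + 1 := by omega
  have e2 : j + 1 - (s + 2) = n := by omega
  have e3 : j - n = s + 1 := by omega
  simp only [e0, e1, e2, hV1, hV2]
  rw [e3]

end Helpers

/-- If `(r_i, q_i)_{0 ≤ i ≤ j}` is a division system up to level `j`, then for
every `(λ, μ) ≠ (0,0)` there exist binary forms `P, L, H` of degrees `d₁-j-1`, `j+1` and
`d₂-d₁+j+1` such that the evaluation of `r_j` at `(P·L, P·H)`, further evaluated at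
`X₀ = λ, X₁ = μ`, is a nonzero element of `k`. -/
theorem statement1 [IsAlgClosed k] (d₁ d₂ : ℕ) (hd₁ : 1 ≤ d₁) (hd : d₁ < d₂)
    (j : ℕ) (hj : j ≤ d₁ - 1) (lam mu : ℕ → k)
    (hlm : ∀ u ≤ j, (lam u, mu u) ≠ (0, 0))
    (r q : ℕ → MvPolynomial Avars k)
    (hds : IsDivisionSystem k d₁ d₂ lam mu j r q)
    (lam' mu' : k) (hlm' : (lam', mu') ≠ (0, 0)) :
    ∃ P L H : MvPolynomial (Fin 2) k,
      P.IsHomogeneous (d₁ - j - 1) ∧ L.IsHomogeneous (j + 1) ∧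
      H.IsHomogeneous (d₂ - d₁ + j + 1) ∧
      evalPt k lam' mu' (evalFG k d₁ d₂ (P * L) (P * H) (r j)) ≠ 0 := by
  have : Infinite k := IsAlgClosed.instInfinite
  classical
  let S : Finset (k × k) :=
    insert (lam', mu') ((Finset.range (j + 1)).image fun u => (lam u, mu u))
  have hS : ∀ s ∈ S, s ≠ (0, 0) := by
    intro s hs
    simp only [S, Finset.mem_insert, Finset.mem_image, Finset.mem_range] at hs
    rcases hs with rfl | ⟨u, hu, rfl⟩
    · exact hlm'
    · exact hlm u (by omega)
  have hmem : ∀ u ≤ j, (lam u, mu u) ∈ S := fun u hu =>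
    Finset.mem_insert_of_mem (Finset.mem_image.mpr ⟨u, Finset.mem_range.mpr (by omega), rfl⟩)
  have hmem' : (lam', mu') ∈ S := Finset.mem_insert_self _ _
  clear_value S
  obtain ⟨M, hM, hMS⟩ := exists_linear S hS
  obtain ⟨U, hUh, hUS, hUrec⟩ := exists_chain S lam mu hM hMS j
  have hP : (M ^ (d₁ - j - 1)).IsHomogeneous (d₁ - j - 1) := by
    simpa using hM.pow (d₁ - j - 1)
  have hPS : ∀ s ∈ S, evalPt k s.1 s.2 (M ^ (d₁ - j - 1)) ≠ 0 := by
    intro s hs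
    simpa only [evalPt, map_pow] using pow_ne_zero _ (hMS s hs)
  generalize M ^ (d₁ - j - 1) = P at hP hPS
  have hLh : (U 0).IsHomogeneous (j + 1) := hUh 0 (by omega)
  have hHh : (linForm (lam 0) (mu 0) ^ (d₂ - d₁ + 1) * U 1).IsHomogeneous (d₂ - d₁ + j + 1) := by
    have := ((linForm_isHomogeneous (lam 0) (mu 0)).pow (d₂ - d₁ + 1)).mul (hUh 1 (by omega))
    rwa [show 1 * (d₂ - d₁ + 1) + (j + 1 - 1) = d₂ - d₁ + j + 1 by omega] at this
  have hG : (P * (linForm (lam 0) (mu 0) ^ (d₂ - d₁ + 1) * U 1)).IsHomogeneous d₂ := by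
    have := hP.mul hHh
    rwa [show d₁ - j - 1 + (d₂ - d₁ + j + 1) = d₂ by omega] at this
  have hT : ∀ s ≤ j + 1, (P * U s).IsHomogeneous (d₁ - s) := by
    intro s hs
    have := hP.mul (hUh s hs)
    rwa [show d₁ - j - 1 + (j + 1 - s) = d₁ - s by omega] at this
  have hTS : ∀ s, ∀ p ∈ S, evalPt k p.1 p.2 (P * U s) ≠ 0 := by
    intro s p hp
    have := mul_ne_zero (hPS p hp) (hUS s p hp)
    simpa only [evalPt, map_mul] using this
  have hTrec : ∀ s, s + 1 ≤ j → ∃ N, P * U s = P * U (s + 1) * N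
      + linForm (lam (s + 1)) (mu (s + 1)) ^ 2 * (P * U (s + 2)) := by
    intro s hs
    obtain ⟨N, hN⟩ := hUrec s hs
    exact ⟨N, by rw [hN]; ring⟩
  have hGT : P * (linForm (lam 0) (mu 0) ^ (d₂ - d₁ + 1) * U 1)
      = linForm (lam 0) (mu 0) ^ (d₂ - d₁ + 1) * (P * U 1) := mul_left_comm _ _ _
  have hTu : ∀ s, ∀ u ≤ j, evalPt k (lam u) (mu u) (P * U s) ≠ 0 :=
    fun s u hu => hTS s (lam u, mu u) (hmem u hu)
  have hj' : j + 1 ≤ d₁ := by omega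
  obtain ⟨a, ha, hra⟩ := evalFG_remainder hj' hlm hds (T := fun s => P * U s)
    (F := P * U 0) rfl hGT hG hT hTu hTrec j le_rfl
  have hne : evalPt k lam' mu' (C a * (P * U (j + 1))) ≠ 0 := by
    have := mul_ne_zero ha (hTS (j + 1) (lam', mu') hmem')
    simpa only [evalPt, map_mul, eval_C] using this
  rw [← hra] at hne
  exact ⟨P, U 0, _, hP, hLh, hHh, hne⟩

end
end

section
/- Let k be a field, let 1 ≤ d₁ < d₂ be integers, and let F, G ∈ k[X₀,X₁] be homogeneous polynomials of degrees d₁ and d₂ such that every common divisor of F and G is a unit. For each integer l ≥ 0, let HF(l) denote the dimension over k of the space consisting of 0 together with the homogeneous polynomials of degree l lying in the ideal generated by F and G. Then HF(l) = 0 for 0 ≤ l ≤ d₁−1; HF(l) = l−d₁+1 for d₁ ≤ l ≤ d₂−1; HF(l) = 2l−d₁−d₂+2 for d₂ ≤ l ≤ d₁+d₂−1; and HF(l) = l+1 for l ≥ d₁+d₂. -/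
/-!
Write `S P l` for the space of degree-`l` forms divisible by `P`, and `V l` for the space of all
binary forms of degree `l`, which has dimension `l + 1`. For a nonzero form `P` of degree `d`,
multiplication by `P` identifies `V (l - d)` with `S P l` if `d ≤ l`, and `S P l = 0` otherwise, so
`dim S P l = l + 1 - d` with truncated subtraction (`finrank_multiplesOfDegree`).

Taking homogeneous components shows that the degree-`l` part of `(F, G)` is `S F l + S G l`
(`degree_part_span_pair`). Since `F` and `G` are relatively prime in a unique factorization domain,
`S F l ∩ S G l = S (F * G) l` (`multiplesOfDegree_inf`). The dimension formula for a sum of two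
subspaces then gives `HF l = (l + 1 - d₁) + (l + 1 - d₂) - (l + 1 - (d₁ + d₂))` for every `l`, and
the four cases are four ranges of this truncated expression.
-/

open MvPolynomial

noncomputable section

theorem finrank_homogeneousSubmodule_fin_two (k : Type) [Field k] (l : ℕ) :
    Module.finrank k (homogeneousSubmodule (Fin 2) k l) = l + 1 := by
  rw [homogeneousSubmodule_eq_finsupp_supported,
    (AddMonoidAlgebra.supportedEquivFinsupp (R := k) (S := k)
      {d : Fin 2 →₀ ℕ | d.degree = l}).finrank_eq]
  -- An exponent vector of degree `l` in two variables is determined by its first entry.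
  let e : {d : Fin 2 →₀ ℕ | d.degree = l} ≃ Fin (l + 1) :=
    { toFun := fun d => ⟨d.1 0, by
        have h := d.2
        simp only [Set.mem_ofPred_eq, Finsupp.degree_eq_sum, Fin.sum_univ_two] at h
        omega⟩
      invFun := fun i => ⟨Finsupp.equivFunOnFinite.symm ![i.1, l - i.1], by
        simp only [Set.mem_ofPred_eq, Finsupp.degree_eq_sum, Fin.sum_univ_two,
          Finsupp.equivFunOnFinite_symm_apply_apply, Matrix.cons_val_zero, Matrix.cons_val_one]
        omega⟩
      left_inv := fun d => by
        have h := d.2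
        simp only [Set.mem_ofPred_eq, Finsupp.degree_eq_sum, Fin.sum_univ_two] at h
        ext j
        fin_cases j <;> simp
        omega
      right_inv := fun i => by
        ext
        simp }
  rw [(Finsupp.domLCongr (R := k) (M := k) e).finrank_eq, Module.finrank_finsupp_self,
    Fintype.card_fin]

instance finite_homogeneousSubmodule_fin_two (k : Type) [Field k] (l : ℕ) :
    Module.Finite k (homogeneousSubmodule (Fin 2) k l) :=
  Module.Finite.iff_fg.mpr (homogeneousSubmodule_fg (Fin 2) k l)

/-- The space of binary forms of degree `l` divisible by `P`: the degree-`l` part of the principal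
ideal `(P)`. -/
def multiplesOfDegree {k : Type} [Field k] (P : MvPolynomial (Fin 2) k) (l : ℕ) :
    Submodule k (MvPolynomial (Fin 2) k) :=
  homogeneousSubmodule (Fin 2) k l ⊓
    Submodule.restrictScalars k (Ideal.span {P} : Ideal (MvPolynomial (Fin 2) k))

theorem mem_multiplesOfDegree {k : Type} [Field k] {P x : MvPolynomial (Fin 2) k} {l : ℕ} :
    x ∈ multiplesOfDegree P l ↔ x.IsHomogeneous l ∧ P ∣ x := by
  simp [multiplesOfDegree, Ideal.mem_span_singleton]

instance finite_multiplesOfDegree {k : Type} [Field k] (P : MvPolynomial (Fin 2) k) (l : ℕ) :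
    Module.Finite k (multiplesOfDegree P l) :=
  Submodule.finiteDimensional_of_le
    (inf_le_left : multiplesOfDegree P l ≤ homogeneousSubmodule (Fin 2) k l)

section

attribute [local instance] MvPolynomial.gradedAlgebra

theorem homogeneousComponent_mul_left {k : Type} [Field k] {P : MvPolynomial (Fin 2) k} {d : ℕ}
    (hP : P.IsHomogeneous d) (a : MvPolynomial (Fin 2) k) (l : ℕ) :
    homogeneousComponent l (P * a) =
      if d ≤ l then P * homogeneousComponent (l - d) a else 0 := by
  have h := DirectSum.coe_decompose_mul_of_left_mem (homogeneousSubmodule (Fin 2) k)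
    (b := a) l hP
  have key : ∀ (x : MvPolynomial (Fin 2) k) (i : ℕ),
      (DirectSum.decompose (homogeneousSubmodule (Fin 2) k) x i : MvPolynomial (Fin 2) k) =
        homogeneousComponent i x := decomposition.decompose'_apply
  simpa only [key] using h

end

/-- The subtraction is truncated: the dimension is `0` when `l < d`. -/
theorem finrank_multiplesOfDegree {k : Type} [Field k] {P : MvPolynomial (Fin 2) k} {d : ℕ}
    (hP : P.IsHomogeneous d) (hP0 : P ≠ 0) (l : ℕ) :
    Module.finrank k (multiplesOfDegree P l) = l + 1 - d := by
  by_cases h : d ≤ l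
  · have hmap : multiplesOfDegree P l =
        (homogeneousSubmodule (Fin 2) k (l - d)).map (LinearMap.mulLeft k P) := by
      ext x
      rw [mem_multiplesOfDegree, Submodule.mem_map]
      constructor
      · rintro ⟨hx, a, rfl⟩
        refine ⟨homogeneousComponent (l - d) a, homogeneousComponent_mem _ _, ?_⟩
        have h1 := homogeneousComponent_mul_left hP a l
        rw [if_pos h, homogeneousComponent_eq_self hx] at h1
        exact h1.symm
      · rintro ⟨a, ha, rfl⟩
        have h2 := hP.mul ((mem_homogeneousSubmodule _ _).mp ha)
        rw [Nat.add_sub_cancel' h] at h2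
        exact ⟨h2, Dvd.intro a rfl⟩
    have hinj : Function.Injective (LinearMap.mulLeft k P) := mul_right_injective₀ hP0
    rw [hmap, ((homogeneousSubmodule (Fin 2) k (l - d)).equivMapOfInjective _ hinj).finrank_eq.symm,
      finrank_homogeneousSubmodule_fin_two]
    omega
  · have hbot : multiplesOfDegree P l = ⊥ := by
      rw [eq_bot_iff]
      intro x hx
      obtain ⟨hx, a, rfl⟩ := mem_multiplesOfDegree.mp hx
      have h1 := homogeneousComponent_mul_left hP a l
      rw [if_neg h, homogeneousComponent_eq_self hx] at h1
      exact h1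
    rw [hbot, finrank_bot]
    omega

theorem degree_part_span_pair {k : Type} [Field k] {F G : MvPolynomial (Fin 2) k} {d₁ d₂ : ℕ}
    (hF : F.IsHomogeneous d₁) (hG : G.IsHomogeneous d₂) (l : ℕ) :
    homogeneousSubmodule (Fin 2) k l ⊓
        Submodule.restrictScalars k (Ideal.span {F, G} : Ideal (MvPolynomial (Fin 2) k)) =
      multiplesOfDegree F l ⊔ multiplesOfDegree G l := by
  have hcomp : ∀ {P : MvPolynomial (Fin 2) k} {d : ℕ}, P.IsHomogeneous d →
      ∀ a, homogeneousComponent l (P * a) ∈ multiplesOfDegree P l := by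
    intro P d hP a
    refine mem_multiplesOfDegree.mpr ⟨homogeneousComponent_isHomogeneous _ _, ?_⟩
    rw [homogeneousComponent_mul_left hP]
    split_ifs
    · exact Dvd.intro _ rfl
    · exact dvd_zero P
  apply le_antisymm
  · rintro x ⟨hx, hxI⟩
    obtain ⟨a, b, rfl⟩ := Ideal.mem_span_pair.mp hxI
    -- A form of degree `l` is its own degree-`l` component, so it splits componentwise.
    rw [← homogeneousComponent_eq_self ((mem_homogeneousSubmodule _ _).mp hx), map_add,
      mul_comm a, mul_comm b]
    exact Submodule.add_mem_sup (hcomp hF a) (hcomp hG b)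
  · refine sup_le ?_ ?_ <;> refine inf_le_inf_left _ ?_ <;>
      refine (Submodule.restrictScalars_le k).mpr (Ideal.span_mono ?_) <;> simp

theorem multiplesOfDegree_inf {k : Type} [Field k] {F G : MvPolynomial (Fin 2) k}
    (h : IsRelPrime F G) (l : ℕ) :
    multiplesOfDegree F l ⊓ multiplesOfDegree G l = multiplesOfDegree (F * G) l := by
  ext x
  simp only [Submodule.mem_inf, mem_multiplesOfDegree]
  constructor
  · rintro ⟨⟨hx, hFx⟩, -, hGx⟩
    exact ⟨hx, h.mul_dvd hFx hGx⟩
  · rintro ⟨hx, hd⟩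
    exact ⟨⟨hx, dvd_of_mul_right_dvd hd⟩, hx, dvd_of_mul_left_dvd hd⟩

/-- Used to see that coprime forms `F`, `G` of positive degree are both nonzero: if one of them
vanished, the other would be a common divisor, hence a unit. -/
theorem not_isUnit_of_isHomogeneous {k : Type} [Field k] {P : MvPolynomial (Fin 2) k} {d : ℕ}
    (hP : P.IsHomogeneous d) (hd : 1 ≤ d) : ¬ IsUnit P := by
  intro hu
  have h0 := (MvPolynomial.isUnit_iff_totalDegree_of_isReduced.mp hu).2
  rw [hP.totalDegree hu.ne_zero] at h0
  omega

/-- Hilbert function of a punctual complete intersection. Let `k` be a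
field, `1 ≤ d₁ < d₂`, and let `F, G ∈ k[X₀,X₁]` be homogeneous of degrees `d₁` and `d₂` with
every common divisor a unit. For `l ≥ 0` let `HF l` be the `k`-dimension of the space of
homogeneous polynomials of degree `l` lying in the ideal generated by `F` and `G`. Then
`HF l = 0` for `l ≤ d₁-1`, `HF l = l-d₁+1` for `d₁ ≤ l ≤ d₂-1`, `HF l = 2l-d₁-d₂+2` for
`d₂ ≤ l ≤ d₁+d₂-1`, and `HF l = l+1` for `l ≥ d₁+d₂`. -/
theorem statement5 (k : Type) [Field k] (d₁ d₂ : ℕ) (hd₁ : 1 ≤ d₁) (hd : d₁ < d₂)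
    (F G : MvPolynomial (Fin 2) k)
    (hF : F.IsHomogeneous d₁) (hG : G.IsHomogeneous d₂)
    (hcop : ∀ D : MvPolynomial (Fin 2) k, D ∣ F → D ∣ G → IsUnit D)
    (HF : ℕ → ℕ)
    (hHF : ∀ l : ℕ, HF l = Module.finrank k
      ↥(homogeneousSubmodule (Fin 2) k l ⊓
        Submodule.restrictScalars k (Ideal.span {F, G} : Ideal (MvPolynomial (Fin 2) k)))) :
    (∀ l ≤ d₁ - 1, HF l = 0) ∧
    (∀ l, d₁ ≤ l → l ≤ d₂ - 1 → HF l = l - d₁ + 1) ∧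
    (∀ l, d₂ ≤ l → l ≤ d₁ + d₂ - 1 → HF l = 2 * l - d₁ - d₂ + 2) ∧
    (∀ l, d₁ + d₂ ≤ l → HF l = l + 1) := by
  have hF0 : F ≠ 0 := by
    rintro rfl
    exact not_isUnit_of_isHomogeneous hG (by omega) (hcop G (dvd_zero G) dvd_rfl)
  have hG0 : G ≠ 0 := by
    rintro rfl
    exact not_isUnit_of_isHomogeneous hF hd₁ (hcop F dvd_rfl (dvd_zero F))
  have hrel : IsRelPrime F G := fun D => hcop D
  have key : ∀ l, HF l + (l + 1 - (d₁ + d₂)) = (l + 1 - d₁) + (l + 1 - d₂) := by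
    intro l
    have h := Submodule.finrank_sup_add_finrank_inf_eq (multiplesOfDegree F l)
      (multiplesOfDegree G l)
    rwa [multiplesOfDegree_inf hrel, finrank_multiplesOfDegree hF hF0,
      finrank_multiplesOfDegree hG hG0,
      finrank_multiplesOfDegree (hF.mul hG) (mul_ne_zero hF0 hG0),
      ← degree_part_span_pair hF hG, ← hHF] at h
  refine ⟨?_, ?_, ?_, ?_⟩
  all_goals
    intro l
    have h := key l
    omega

end
end

section
/- Let 1 ≤ K ≤ d₁−1 and 0 ≤ i ≤ K−1. Fix scalars (λ_u,μ_u) ≠ (0,0) in k² for 0 ≤ u ≤ K−1. Let (r_h, q_h)_{0 ≤ h ≤ K−1} be a division system up to level K−1 for the degrees (d₁, d₂), and let (r̄_h, q̄_h)_{0 ≤ h ≤ K−1} be a division system up to level K−1 for the degrees (K, d₂−d₁+K) with the same scalars (λ_u,μ_u). Then for all homogeneous polynomials p, l, h ∈ k[X₀,X₁] of degrees d₁−K, K and d₂−d₁+K respectively, the evaluation of r_i at (p·l, p·h) equals p(λ₀,μ₀)^{d₂−d₁+1} · (∏_{j=1}^{i} p(λ_j,μ_j)²) · p · R̄_i, where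 R̄_i denotes the evaluation of r̄_i at (l, h) and p(λ,μ) denotes the value of p at (X₀,X₁) = (λ,μ). -/
/-!
Evaluating both division systems at `(p l, p h)` and `(l, h)` gives two Euclidean-type chains of
binary forms, and `p` times the second chain satisfies the same kind of identities as the first.
In each identity the remainder is determined by the divisor and the dividend, provided the
divisor does not vanish at the point `(λ, μ)` in question: then the prime linear form
`L = λ X₁ - μ X₀` does not divide the divisor, so a difference of two remainders, which has
smaller degree than the divisor, must be zero (`remainder_unique`, `compare_step`). Induction on
the level gives the scaling formula `IsEvalSystem.scaled` whenever `p(λ_u, μ_u)`, `l(λ₀, μ₀)` and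
`R̄_j(λ_{j+1}, μ_{j+1})` are all nonzero.

For arbitrary `(p, l, h)` these values may vanish, and the formula follows by a density argument
along a line. The evaluation is set up with coefficients in any `k`-algebra `B` (`evB`), and the
scaling formula is proved when `B` is a factorial domain. One triple `(p₀, l₀, h₀)` over `k` that
is nondegenerate for the given scalars exists (`exists_nondegenerate`): the Euclidean chain is run
backwards from `1`, choosing at every step a scalar that avoids finitely many values
(`exists_chain`), and by uniqueness of remainders the evaluated system at such a pair agrees with
the chain up to nonzero scalars (`IsEvalSystem.eq_chain`). The line in `T` joining
`(p₀, l₀, h₀)` to `(p, l, h)` has coefficients in `k[T]`; the required values are nonzero in `k[T]`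
because they are nonzero at `T = 0`, so the scaling formula holds over `k[T]`, and `T = 1` gives
the claim.
-/

open MvPolynomial

noncomputable section

variable (k : Type) [Field k]

/-! ### Evaluation over a `k`-algebra -/

section Coeff

variable {k}
variable (B : Type) [CommRing B] [Algebra k B]

/-- The value of a binary form with coefficients in `B` at the `k`-point `(λ, μ)`. -/
def ptB (lam mu : k) : MvPolynomial (Fin 2) B →ₐ[B] B :=
  aeval (fun t : Fin 2 => if t = 0 then algebraMap k B lam else algebraMap k B mu)

/-- The linear form `λ X₁ - μ X₀` over `B`. -/
def LB (lam mu : k) : MvPolynomial (Fin 2) B :=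
  C (algebraMap k B lam) * X 1 - C (algebraMap k B mu) * X 0

variable {B}

/-- Evaluation of an element of `A` at a pair of binary forms with coefficients in the
`k`-algebra `B`; for `B = k` this is `evalFG`. -/
def evB (e₁ e₂ : ℕ) (F G : MvPolynomial (Fin 2) B) :
    MvPolynomial Avars k →ₐ[k] MvPolynomial (Fin 2) B :=
  aeval (Sum.elim (fun t : Fin 2 => X t)
    (Sum.elim
      (fun j => C (coeff (Finsupp.single 0 (e₁ - j) + Finsupp.single 1 j) F))
      (fun j => C (coeff (Finsupp.single 0 (e₂ - j) + Finsupp.single 1 j) G))))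

lemma binary_form_eq_sum {d : ℕ} {F : MvPolynomial (Fin 2) B} (hF : F.IsHomogeneous d) :
    ∑ j ∈ Finset.range (d + 1),
      C (coeff (Finsupp.single 0 (d - j) + Finsupp.single 1 j) F) * X 0 ^ (d - j) * X 1 ^ j
      = F := by
  have hmon : ∀ j, (C (coeff (Finsupp.single 0 (d - j) + Finsupp.single 1 j) F)
      * X 0 ^ (d - j) * X 1 ^ j : MvPolynomial (Fin 2) B)
      = monomial (Finsupp.single 0 (d - j) + Finsupp.single 1 j)
        (coeff (Finsupp.single 0 (d - j) + Finsupp.single 1 j) F) := by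
    intro j
    rw [X_pow_eq_monomial, X_pow_eq_monomial, mul_assoc, monomial_mul, C_mul_monomial]
    simp
  ext m
  simp only [hmon, coeff_sum, coeff_monomial]
  by_cases hm : m 0 + m 1 = d
  · have hms : Finsupp.single 0 (d - m 1) + Finsupp.single 1 (m 1) = m := by
      ext t
      fin_cases t
      · simp; omega
      · simp
    rw [Finset.sum_eq_single (m 1)]
    · rw [if_pos hms, hms]
    · intro j _ hj
      rw [if_neg]
      rintro rfl
      simp at hj
    · intro hn
      simp at hn
      omega
  · have h0 : coeff m F = 0 := by
      apply hF.coeff_eq_zero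
      rw [Finsupp.degree_eq_sum]
      simpa using hm
    rw [h0]
    apply Finset.sum_eq_zero
    intro j hj
    rw [if_neg]
    rintro rfl
    simp at hm hj
    omega

lemma evB_fgen {e₁ e₂ : ℕ} {F G : MvPolynomial (Fin 2) B} (hF : F.IsHomogeneous e₁) :
    evB e₁ e₂ F G (fgen k e₁) = F := by
  conv_rhs => rw [← binary_form_eq_sum hF]
  simp [evB, fgen, fA, XA]

lemma evB_ggen {e₁ e₂ : ℕ} {F G : MvPolynomial (Fin 2) B} (hG : G.IsHomogeneous e₂) :
    evB e₁ e₂ F G (ggen k e₂) = G := by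
  conv_rhs => rw [← binary_form_eq_sum hG]
  simp [evB, ggen, gA, XA]

lemma evB_Lform (e₁ e₂ : ℕ) (F G : MvPolynomial (Fin 2) B) (lam mu : k) :
    evB e₁ e₂ F G (Lform k lam mu) = LB B lam mu := by
  simp [evB, Lform, LB, XA, MvPolynomial.algebraMap_eq,
    IsScalarTower.algebraMap_apply k B (MvPolynomial (Fin 2) B)]

/-- Substituting a point and then evaluating at `(F, G)` is the same as evaluating at `(F, G)` and
then substituting the point. -/
lemma evB_evalXY (e₁ e₂ : ℕ) (F G : MvPolynomial (Fin 2) B) (lam mu : k)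
    (a : MvPolynomial Avars k) :
    evB e₁ e₂ F G (evalXY k lam mu a) = C (ptB B lam mu (evB e₁ e₂ F G a)) := by
  induction a using MvPolynomial.induction_on with
  | C c =>
    simp [evB, evalXY, ptB, MvPolynomial.algebraMap_eq,
      IsScalarTower.algebraMap_apply k B (MvPolynomial (Fin 2) B)]
  | add a b ha hb => simp only [map_add, ha, hb]
  | mul_X a v ha =>
    simp only [map_mul, ha]
    congr 1
    rcases v with t | j | j
    · fin_cases t <;> simp [evB, evalXY, ptB, MvPolynomial.algebraMap_eq,
        IsScalarTower.algebraMap_apply k B (MvPolynomial (Fin 2) B)]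
    · simp [evB, evalXY, ptB]
    · simp [evB, evalXY, ptB]

lemma evB_homogeneous (e₁ e₂ : ℕ) (F G : MvPolynomial (Fin 2) B) {a : MvPolynomial Avars k}
    {m : ℕ × ℕ × ℕ} (ha : IsWeightedHomogeneous wA a m) :
    (evB e₁ e₂ F G a).IsHomogeneous m.1 := by
  rw [evB, aeval_def, eval₂]
  apply IsHomogeneous.sum
  intro s hs
  rw [← zero_add m.1]
  refine IsHomogeneous.mul ?_ ?_
  · rw [IsScalarTower.algebraMap_apply k B (MvPolynomial (Fin 2) B)]
    exact isHomogeneous_C _ _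
  · have hw : m.1 = ∑ v ∈ s.support, (wA v).1 * s v := by
      rw [← ha (mem_support_iff.mp hs), Finsupp.weight_apply, Finsupp.sum, Prod.fst_sum]
      exact Finset.sum_congr rfl fun v _ => by simp [mul_comm]
    rw [hw]
    refine IsHomogeneous.prod _ _ _ fun v _ => IsHomogeneous.pow ?_ _
    rcases v with t | j | j
    · exact isHomogeneous_X _ _
    · exact isHomogeneous_C _ _
    · exact isHomogeneous_C _ _

/-- Naturality of evaluation under change of coefficients. -/
lemma map_evB {B' : Type} [CommRing B'] [Algebra k B'] (φ : B →ₐ[k] B') (e₁ e₂ : ℕ)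
    (F G : MvPolynomial (Fin 2) B) (a : MvPolynomial Avars k) :
    map φ.toRingHom (evB e₁ e₂ F G a)
      = evB e₁ e₂ (map φ.toRingHom F) (map φ.toRingHom G) a := by
  induction a using MvPolynomial.induction_on with
  | C c =>
    simp [evB, MvPolynomial.algebraMap_eq,
      IsScalarTower.algebraMap_apply k B (MvPolynomial (Fin 2) B),
      IsScalarTower.algebraMap_apply k B' (MvPolynomial (Fin 2) B')]
  | add a b ha hb => simp only [map_add, ha, hb]
  | mul_X a v ha =>
    simp only [map_mul, ha]
    congr 1
    rcases v with t | j | j <;> simp [evB, coeff_map]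

lemma map_ptB {B' : Type} [CommRing B'] [Algebra k B'] (φ : B →ₐ[k] B') (lam mu : k)
    (P : MvPolynomial (Fin 2) B) :
    φ (ptB B lam mu P) = ptB B' lam mu (map φ.toRingHom P) := by
  induction P using MvPolynomial.induction_on with
  | C c => simp [ptB]
  | add a b ha hb => simp only [map_add, ha, hb]
  | mul_X a v ha =>
    simp only [map_mul, ha]
    congr 1
    fin_cases v <;> simp [ptB]

lemma LB_homogeneous (lam mu : k) : (LB B lam mu).IsHomogeneous 1 :=
  (isHomogeneous_C_mul_X _ _).sub (isHomogeneous_C_mul_X _ _)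

lemma ptB_C (lam mu : k) (c : B) : ptB B lam mu (C c) = c := by simp [ptB]

lemma ptB_LB (lam mu : k) : ptB B lam mu (LB B lam mu) = 0 := by
  simp [ptB, LB, mul_comm]

/-- A division system evaluated at a pair `(F, G)` of binary forms: the sequence `R` of binary
forms of degrees `e - 1 - i`, together with the cofactors `Q`, satisfying the specialized
division identities, the exponent of the first one being `N`. -/
structure IsEvalSystem (e N : ℕ) (lam mu : ℕ → k) (J : ℕ) (F G : MvPolynomial (Fin 2) B)
    (R Q : ℕ → MvPolynomial (Fin 2) B) : Prop where
  hom : ∀ i ≤ J, (R i).IsHomogeneous (e - 1 - i)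
  zero : C (ptB B (lam 0) (mu 0) F) ^ N * G = F * Q 0 + LB B (lam 0) (mu 0) ^ N * R 0
  one : 1 ≤ J → C (ptB B (lam 1) (mu 1) (R 0)) ^ 2 * F
    = R 0 * Q 1 + C (ptB B (lam 0) (mu 0) F) ^ N * LB B (lam 1) (mu 1) ^ 2 * R 1
  step : ∀ i, i + 2 ≤ J → C (ptB B (lam (i + 2)) (mu (i + 2)) (R (i + 1))) ^ 2 * R i
    = R (i + 1) * Q (i + 2) + C (ptB B (lam (i + 1)) (mu (i + 1)) (R i)) ^ 2
      * LB B (lam (i + 2)) (mu (i + 2)) ^ 2 * R (i + 2)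

/-- Evaluating a division system at forms of the right degrees gives an evaluated system. The
identities survive because `evB` commutes with substitution of a point (`evB_evalXY`). -/
lemma IsDivisionSystem.eval {e₁ e₂ J : ℕ} {lam mu : ℕ → k} {r q : ℕ → MvPolynomial Avars k}
    (hs : IsDivisionSystem k e₁ e₂ lam mu J r q) {F G : MvPolynomial (Fin 2) B}
    (hF : F.IsHomogeneous e₁) (hG : G.IsHomogeneous e₂) :
    IsEvalSystem e₁ (e₂ - e₁ + 1) lam mu J F G (fun i => evB e₁ e₂ F G (r i))
      (fun i => evB e₁ e₂ F G (q i)) := by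
  obtain ⟨h1, -, h2, h3, h4⟩ := hs
  refine ⟨fun i hi => evB_homogeneous _ _ _ _ (h1 i hi), ?_, fun hJ => ?_, fun i hi => ?_⟩
  · simpa only [map_mul, map_add, map_pow, evB_evalXY, evB_Lform, evB_fgen hF, evB_ggen hG]
      using congrArg (evB e₁ e₂ F G) h2
  · simpa only [map_mul, map_add, map_pow, evB_evalXY, evB_Lform, evB_fgen hF, evB_ggen hG]
      using congrArg (evB e₁ e₂ F G) (h3 hJ)
  · have := congrArg (evB e₁ e₂ F G) (h4 (i + 2) (by omega) hi)
    simpa only [map_mul, map_add, map_pow, evB_evalXY, evB_Lform,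
      show i + 2 - 1 = i + 1 by omega, show i + 2 - 2 = i by omega] using this

/-! ### Uniqueness of remainders and the scaling formula -/

section Domain

variable [IsDomain B] [UniqueFactorizationMonoid B]

/-- `L` is irreducible since its total degree is one and one of its coefficients is a unit. -/
lemma LB_prime {lam mu : k} (hlm : (lam, mu) ≠ (0, 0)) : Prime (LB B lam mu) := by
  have c1 : coeff (Finsupp.single 1 1) (LB B lam mu) = algebraMap k B lam := by
    simp [LB, coeff_X, Finsupp.single_left_inj]
  have c0 : coeff (Finsupp.single 0 1) (LB B lam mu) = - algebraMap k B mu := by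
    simp [LB, coeff_X, Finsupp.single_left_inj]
  have hor : lam ≠ 0 ∨ mu ≠ 0 := by
    by_contra! hc
    exact hlm (by rw [hc.1, hc.2])
  have hne : LB B lam mu ≠ 0 := by
    intro h0
    rw [h0, coeff_zero] at c1 c0
    rcases hor with h | h
    · exact h ((map_eq_zero (algebraMap k B)).mp c1.symm)
    · exact h ((map_eq_zero (algebraMap k B)).mp (neg_eq_zero.mp c0.symm))
  apply Irreducible.prime
  refine irreducible_of_totalDegree_eq_one ((LB_homogeneous lam mu).totalDegree hne) ?_
  intro x hx
  rcases hor with h | h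
  · exact isUnit_of_dvd_unit (c1 ▸ hx _) ((IsUnit.mk0 _ h).map (algebraMap k B))
  · exact isUnit_of_dvd_unit (c0 ▸ hx _) ((IsUnit.mk0 _ h).map (algebraMap k B)).neg

/-- Uniqueness of the remainder: if `A` is a form of degree `a` not vanishing at `(λ, μ)`, then
a polynomial `Z` of degree `< a` with `A ∣ L^n Z` is zero, because the prime `L` does not divide
`A`. -/
lemma remainder_unique_s6 {lam mu : k} (hlm : (lam, mu) ≠ (0, 0)) {a n : ℕ}
    {A Y Z : MvPolynomial (Fin 2) B} (hA : A.IsHomogeneous a) (hA0 : ptB B lam mu A ≠ 0)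
    (hZ : Z.totalDegree < a) (hAZ : A * Y = LB B lam mu ^ n * Z) : Z = 0 := by
  have hP := LB_prime (B := B) hlm
  have hnd : ¬ LB B lam mu ∣ A := by
    rintro ⟨t, rfl⟩
    simp [ptB_LB] at hA0
  have hdvd : LB B lam mu ^ n ∣ Y := hP.pow_dvd_of_dvd_mul_left n hnd ⟨Z, hAZ⟩
  obtain ⟨Y', rfl⟩ := hdvd
  have hZA : Z = A * Y' := mul_left_cancel₀ (pow_ne_zero n hP.ne_zero) (by rw [← hAZ]; ring)
  have hAne : A ≠ 0 := by
    rintro rfl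
    simp at hA0
  by_contra hne
  have hle := totalDegree_le_of_dvd_of_isDomain ⟨Y', hZA⟩ hne
  rw [hA.totalDegree hAne] at hle
  omega

/-- Comparison of two scaled divisions by the same form `A`, of `W` and of a multiple `w W`:
the remainders `U` and `V` satisfy a proportionality with explicit coefficients. -/
lemma compare_step {lam mu : k} (hlm : (lam, mu) ≠ (0, 0)) {a b n : ℕ} (hb : b < a)
    {A W T T' U V : MvPolynomial (Fin 2) B} {α β α' β' w : B}
    (hA : A.IsHomogeneous a) (hA0 : ptB B lam mu A ≠ 0)
    (hU : U.IsHomogeneous b) (hV : V.IsHomogeneous b)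
    (h₁ : C α * W = A * T + C β * LB B lam mu ^ n * U)
    (h₂ : C α' * (C w * W) = A * T' + C β' * LB B lam mu ^ n * V) :
    C (α * β') * V = C (α' * w * β) * U := by
  have hz : (C (α * β') * V - C (α' * w * β) * U) = 0 := by
    refine remainder_unique_s6 hlm (n := n) (Y := C (α' * w) * T - C α * T') hA hA0 ?_ ?_
    · exact lt_of_le_of_lt ((hV.C_mul _).sub (hU.C_mul _)).totalDegree_le hb
    · simp only [C_mul]
      linear_combination C α * h₂ - C α' * C w * h₁
  exact sub_eq_zero.mp hz

/-- The scaling formula under the nonvanishing conditions that make all divisions of both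
systems unique. -/
lemma IsEvalSystem.scaled {e K N m J : ℕ} {lam mu : ℕ → k}
    {p l h : MvPolynomial (Fin 2) B} {R Q R' Q' : ℕ → MvPolynomial (Fin 2) B}
    (hlm : ∀ u ≤ J, (lam u, mu u) ≠ (0, 0)) (he : e = m + K) (hJ : J + 1 ≤ K)
    (hs : IsEvalSystem e N lam mu J (p * l) (p * h) R Q)
    (hs' : IsEvalSystem K N lam mu J l h R' Q')
    (hp : p.IsHomogeneous m) (hl : l.IsHomogeneous K)
    (hp0 : ∀ u ≤ J, ptB B (lam u) (mu u) p ≠ 0) (hl0 : ptB B (lam 0) (mu 0) l ≠ 0)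
    (hR' : ∀ i, i + 1 ≤ J → ptB B (lam (i + 1)) (mu (i + 1)) (R' i) ≠ 0) :
    ∀ i ≤ J, R i = C (ptB B (lam 0) (mu 0) p ^ N
      * ∏ j ∈ Finset.Icc 1 i, ptB B (lam j) (mu j) p ^ 2) * (p * R' i) := by
  have hU : ∀ i ≤ J, (p * R' i).IsHomogeneous (e - 1 - i) := by
    intro i hi
    have := hp.mul (hs'.hom i hi)
    rwa [show m + (K - 1 - i) = e - 1 - i by omega] at this
  have cancel : ∀ {x y : B} {V U : MvPolynomial (Fin 2) B}, x ≠ 0 →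
      C x * V = C x * (C y * U) → V = C y * U := by
    intro x y V U hx hxy
    exact mul_left_cancel₀ (by simpa using hx) hxy
  obtain ⟨c, hc⟩ : ∃ c : ℕ → B, c = fun i => ptB B (lam 0) (mu 0) p ^ N
      * ∏ j ∈ Finset.Icc 1 i, ptB B (lam j) (mu j) p ^ 2 := ⟨_, rfl⟩
  have hc0 : c 0 = ptB B (lam 0) (mu 0) p ^ N := by simp [hc]
  have hcs : ∀ i, c (i + 1) = c i * ptB B (lam (i + 1)) (mu (i + 1)) p ^ 2 := by
    intro i
    simp only [hc]
    rw [Finset.prod_Icc_succ_top (by omega), mul_assoc]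
  have hcne : ∀ i ≤ J, c i ≠ 0 := by
    intro i hi
    rw [hc]
    refine mul_ne_zero (pow_ne_zero _ (hp0 0 (by omega))) (Finset.prod_ne_zero_iff.mpr ?_)
    intro j hj
    rw [Finset.mem_Icc] at hj
    exact pow_ne_zero _ (hp0 j (by omega))
  suffices hmain : ∀ i ≤ J, R i = C (c i) * (p * R' i) by
    intro i hi
    rw [hmain i hi, hc]
  clear hc
  intro i
  induction i using Nat.strong_induction_on with
  | _ i ih =>
    intro hi
    match i, ih, hi with
    | 0, _, hi =>
      have key := compare_step (hlm 0 hi) (a := e) (b := e - 1 - 0) (n := N) (by omega)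
        (A := p * l) (W := p * h) (T := Q' 0) (T' := Q 0) (U := p * R' 0) (V := R 0)
        (α := ptB B (lam 0) (mu 0) l ^ N) (β := 1)
        (α' := ptB B (lam 0) (mu 0) (p * l) ^ N) (β' := 1) (w := 1)
        (by rw [he]; exact hp.mul hl)
        (by rw [map_mul]; exact mul_ne_zero (hp0 0 hi) hl0) (hU 0 hi) (hs.hom 0 hi)
        (by simp only [C_pow, C_1]; linear_combination p * hs'.zero)
        (by simp only [C_pow, C_1]; linear_combination hs.zero)
      refine cancel (pow_ne_zero N hl0) ?_
      rw [mul_one] at key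
      rw [key, hc0]
      simp only [map_mul, mul_pow, map_pow, mul_one]
      ring
    | 1, ih, hi =>
      have h0 := ih 0 (by omega) (by omega)
      have key := compare_step (hlm 1 hi) (a := e - 1 - 0) (b := e - 1 - 1) (n := 2) (by omega)
        (A := p * R' 0) (W := p * l) (T := Q' 1) (T' := C (c 0) * Q 1)
        (U := p * R' 1) (V := R 1)
        (α := ptB B (lam 1) (mu 1) (R' 0) ^ 2) (β := ptB B (lam 0) (mu 0) l ^ N)
        (α' := ptB B (lam 1) (mu 1) (R 0) ^ 2) (β' := ptB B (lam 0) (mu 0) (p * l) ^ N) (w := 1)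
        (hU 0 (by omega))
        (by rw [map_mul]; exact mul_ne_zero (hp0 1 hi) (hR' 0 hi)) (hU 1 hi) (hs.hom 1 hi)
        (by simp only [C_pow]; linear_combination p * hs'.one hi)
        (by
          simp only [C_pow, C_1]
          linear_combination hs.one hi + Q 1 * h0)
      refine cancel (x := ptB B (lam 1) (mu 1) (R' 0) ^ 2 * ptB B (lam 0) (mu 0) l ^ N * c 0)
        (mul_ne_zero (mul_ne_zero (pow_ne_zero 2 (hR' 0 hi)) (pow_ne_zero N hl0))
          (hcne 0 (by omega))) ?_
      rw [h0] at key
      simp only [map_mul, ptB_C, mul_pow, ← hc0] at key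
      rw [show c 1 = _ from hcs 0]
      simp only [C_mul, C_pow, C_1, zero_add] at key ⊢
      linear_combination key
    | i + 2, ih, hi =>
      have h0 := ih i (by omega) (by omega)
      have h1 := ih (i + 1) (by omega) (by omega)
      have key := compare_step (hlm (i + 2) hi) (a := e - 1 - (i + 1)) (b := e - 1 - (i + 2))
        (n := 2) (by omega)
        (A := p * R' (i + 1)) (W := p * R' i) (T := Q' (i + 2)) (T' := C (c (i + 1)) * Q (i + 2))
        (U := p * R' (i + 2)) (V := R (i + 2))
        (α := ptB B (lam (i + 2)) (mu (i + 2)) (R' (i + 1)) ^ 2)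
        (β := ptB B (lam (i + 1)) (mu (i + 1)) (R' i) ^ 2)
        (α' := ptB B (lam (i + 2)) (mu (i + 2)) (R (i + 1)) ^ 2)
        (β' := ptB B (lam (i + 1)) (mu (i + 1)) (R i) ^ 2) (w := c i)
        (hU (i + 1) (by omega))
        (by rw [map_mul]; exact mul_ne_zero (hp0 (i + 2) hi) (hR' (i + 1) hi)) (hU (i + 2) hi)
        (hs.hom (i + 2) hi)
        (by simp only [C_pow]; linear_combination p * hs'.step i hi)
        (by
          rw [← h0]
          simp only [C_pow]
          linear_combination hs.step i hi + Q (i + 2) * h1)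
      refine cancel (x := ptB B (lam (i + 2)) (mu (i + 2)) (R' (i + 1)) ^ 2
          * ptB B (lam (i + 1)) (mu (i + 1)) (R' i) ^ 2 * (c i * c (i + 1)))
        (mul_ne_zero (mul_ne_zero (pow_ne_zero 2 (hR' (i + 1) hi))
          (pow_ne_zero 2 (hR' i (by omega))))
          (mul_ne_zero (hcne i (by omega)) (hcne (i + 1) (by omega)))) ?_
      rw [h0, h1] at key
      simp only [map_mul, ptB_C] at key
      rw [hcs (i + 1)]
      have hci := congrArg (C (σ := Fin 2)) (hcs i)
      simp only [C_mul, C_pow] at key hci ⊢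
      rw [hci] at key ⊢
      linear_combination key

end Domain

/-! ### A nondegenerate chain of divisions -/

/-- If `(F, G)` is the start of a chain `S` of normalized divisions all of which are
nondegenerate, then the members of an evaluated division system at `(F, G)` are nonzero scalar
multiples of those of the chain. -/
lemma IsEvalSystem.eq_chain {e N J : ℕ} {lam mu : ℕ → k} {F G : MvPolynomial (Fin 2) k}
    {R Q S : ℕ → MvPolynomial (Fin 2) k} (hlm : ∀ u ≤ J, (lam u, mu u) ≠ (0, 0))
    (hJ : J + 1 ≤ e) (hs : IsEvalSystem e N lam mu J F G R Q) (hF : F.IsHomogeneous e)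
    (hS : ∀ i ≤ J, (S i).IsHomogeneous (e - 1 - i))
    (hF0 : ptB k (lam 0) (mu 0) F ≠ 0)
    (hS0 : ∀ i ≤ J, ∀ u ≤ J, ptB k (lam u) (mu u) (S i) ≠ 0)
    (hG : G = LB k (lam 0) (mu 0) ^ N * S 0)
    (h1 : 1 ≤ J → ∃ T, F = S 0 * T + LB k (lam 1) (mu 1) ^ 2 * S 1)
    (h2 : ∀ i, i + 2 ≤ J →
      ∃ T, S i = S (i + 1) * T + LB k (lam (i + 2)) (mu (i + 2)) ^ 2 * S (i + 2)) :
    ∀ i ≤ J, ∃ c : k, c ≠ 0 ∧ R i = C c * S i := by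
  have cancel : ∀ {x y : k} {V U : MvPolynomial (Fin 2) k}, x ≠ 0 → y ≠ 0 →
      C x * V = C y * U → ∃ c : k, c ≠ 0 ∧ V = C c * U := by
    intro x y V U hx hy hxy
    refine ⟨x⁻¹ * y, mul_ne_zero (inv_ne_zero hx) hy, ?_⟩
    rw [C_mul, mul_assoc, ← hxy, ← mul_assoc, ← C_mul, inv_mul_cancel₀ hx, C_1, one_mul]
  intro i
  induction i using Nat.strong_induction_on with
  | _ i ih =>
    intro hi
    match i, ih, hi with
    | 0, _, hi =>
      have key := compare_step (hlm 0 hi) (a := e) (b := e - 1 - 0) (n := N) (by omega)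
        (A := F) (W := G) (T := 0) (T' := Q 0) (U := S 0) (V := R 0)
        (α := 1) (β := 1) (α' := ptB k (lam 0) (mu 0) F ^ N) (β' := 1) (w := 1)
        hF hF0 (hS 0 hi) (hs.hom 0 hi)
        (by simp only [C_1]; linear_combination hG)
        (by simp only [C_pow, C_1]; linear_combination hs.zero)
      exact cancel (by simp) (by simpa using pow_ne_zero N hF0) key
    | 1, ih, hi =>
      obtain ⟨c0, hc0, h0⟩ := ih 0 (by omega) (by omega)
      obtain ⟨T, hT⟩ := h1 hi
      have key := compare_step (hlm 1 hi) (a := e - 1 - 0) (b := e - 1 - 1) (n := 2) (by omega)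
        (A := S 0) (W := F) (T := T) (T' := C c0 * Q 1) (U := S 1) (V := R 1)
        (α := 1) (β := 1) (α' := ptB k (lam 1) (mu 1) (R 0) ^ 2)
        (β' := ptB k (lam 0) (mu 0) F ^ N) (w := 1)
        (hS 0 (by omega)) (hS0 0 (by omega) 1 hi) (hS 1 hi) (hs.hom 1 hi)
        (by simp only [C_1]; linear_combination hT)
        (by simp only [C_pow, C_1]; linear_combination hs.one hi + Q 1 * h0)
      refine cancel ?_ ?_ key
      · simpa using pow_ne_zero N hF0
      · rw [h0, map_mul, ptB_C]
        simpa using ⟨hc0, hS0 0 (by omega) 1 hi⟩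
    | i + 2, ih, hi =>
      obtain ⟨c0, hc0, h0⟩ := ih i (by omega) (by omega)
      obtain ⟨c1, hc1, h1⟩ := ih (i + 1) (by omega) (by omega)
      obtain ⟨T, hT⟩ := h2 i hi
      have key := compare_step (hlm (i + 2) hi) (a := e - 1 - (i + 1)) (b := e - 1 - (i + 2))
        (n := 2) (by omega)
        (A := S (i + 1)) (W := S i) (T := T) (T' := C c1 * Q (i + 2))
        (U := S (i + 2)) (V := R (i + 2)) (α := 1) (β := 1)
        (α' := ptB k (lam (i + 2)) (mu (i + 2)) (R (i + 1)) ^ 2)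
        (β' := ptB k (lam (i + 1)) (mu (i + 1)) (R i) ^ 2) (w := c0)
        (hS (i + 1) (by omega)) (hS0 (i + 1) (by omega) (i + 2) hi) (hS (i + 2) hi)
        (hs.hom (i + 2) hi)
        (by simp only [C_1]; linear_combination hT)
        (by
          rw [← h0]
          simp only [C_pow]
          linear_combination hs.step i hi + Q (i + 2) * h1)
      refine cancel ?_ ?_ key
      · rw [h0, map_mul, ptB_C]
        simpa using ⟨hc0, hS0 i (by omega) (i + 1) (by omega)⟩
      · rw [h1, map_mul, ptB_C]
        simpa using ⟨⟨hc1, hS0 (i + 1) (by omega) (i + 2) hi⟩, hc0⟩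

/-- The recursion `W₀ = 1`, `W₁ = M`, `W_{n+2} = c M W_{n+1} + D_n W_n`, where the scalar `c` is
a prescribed function of `M W_{n+1}` and `D_n W_n`. -/
def chainSeq (M : MvPolynomial (Fin 2) k) (D : ℕ → MvPolynomial (Fin 2) k)
    (c : MvPolynomial (Fin 2) k → MvPolynomial (Fin 2) k → k) : ℕ → MvPolynomial (Fin 2) k
  | 0 => 1
  | 1 => M
  | n + 2 => C (c (M * chainSeq M D c (n + 1)) (D n * chainSeq M D c n))
      * (M * chainSeq M D c (n + 1)) + D n * chainSeq M D c n

lemma exists_linear_form [Infinite k] (J : ℕ) (lam mu : ℕ → k)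
    (hlm : ∀ u ≤ J, (lam u, mu u) ≠ (0, 0)) :
    ∃ M : MvPolynomial (Fin 2) k, M.IsHomogeneous 1 ∧
      ∀ u ≤ J, ptB k (lam u) (mu u) M ≠ 0 := by
  classical
  obtain ⟨a, ha⟩ := Infinite.exists_notMem_finset
    ((Finset.range (J + 1)).image fun u => -mu u / lam u)
  refine ⟨C a * X 0 + X 1, (isHomogeneous_C_mul_X _ _).add (isHomogeneous_X _ _), ?_⟩
  intro u hu h0
  have h1 : a * lam u + mu u = 0 := by simpa [ptB] using h0
  by_cases hl : lam u = 0
  · exact hlm u hu (by rw [hl] at h1 ⊢; simpa using h1)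
  · apply ha
    rw [Finset.mem_image]
    refine ⟨u, Finset.mem_range.mpr (by omega), ?_⟩
    field_simp
    linear_combination -h1

/-- A sequence of binary forms, none of which vanishes at the given points, that runs a chain of
normalized divisions backwards. -/
lemma exists_chain_s6 [Infinite k] (J : ℕ) (lam mu : ℕ → k)
    (hlm : ∀ u ≤ J, (lam u, mu u) ≠ (0, 0)) :
    ∃ W : ℕ → MvPolynomial (Fin 2) k, (∀ n, (W n).IsHomogeneous n) ∧
      (∀ n, ∀ u ≤ J, ptB k (lam u) (mu u) (W n) ≠ 0) ∧
      ∀ n, ∃ T, W (n + 2) = W (n + 1) * T + LB k (lam (J - n)) (mu (J - n)) ^ 2 * W n := by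
  obtain ⟨M, hM, hM0⟩ := exists_linear_form J lam mu hlm
  -- the scalar avoids the finitely many values at which the combination vanishes at some point
  have hc : ∀ A E : MvPolynomial (Fin 2) k, ∃ c : k, ∀ u ≤ J, ptB k (lam u) (mu u) A ≠ 0 →
      ptB k (lam u) (mu u) (C c * A + E) ≠ 0 := by
    intro A E
    classical
    obtain ⟨c, hc⟩ := Infinite.exists_notMem_finset ((Finset.range (J + 1)).image
      fun u => -ptB k (lam u) (mu u) E / ptB k (lam u) (mu u) A)
    refine ⟨c, fun u hu hA h0 => hc ?_⟩
    rw [map_add, map_mul, ptB_C] at h0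
    rw [Finset.mem_image]
    refine ⟨u, Finset.mem_range.mpr (by omega), ?_⟩
    field_simp
    linear_combination -h0
  choose c hc using hc
  set W := chainSeq M (fun n => LB k (lam (J - n)) (mu (J - n)) ^ 2) c with hW
  have hrec : ∀ n, W (n + 2) = C (c (M * W (n + 1))
      (LB k (lam (J - n)) (mu (J - n)) ^ 2 * W n)) * (M * W (n + 1))
      + LB k (lam (J - n)) (mu (J - n)) ^ 2 * W n := fun n => rfl
  have hW0 : W 0 = 1 := rfl
  have hW1 : W 1 = M := rfl
  clear_value W
  refine ⟨W, fun n => ?_, fun n => ?_, fun n => ⟨C (c (M * W (n + 1))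
      (LB k (lam (J - n)) (mu (J - n)) ^ 2 * W n)) * M, by rw [hrec n]; ring⟩⟩
  · induction n using Nat.twoStepInduction with
    | zero => rw [hW0]; exact isHomogeneous_one _ _
    | one => rwa [hW1]
    | more n h0 h1 =>
      rw [hrec]
      refine IsHomogeneous.add (IsHomogeneous.C_mul ?_ _) ?_
      · have := hM.mul h1
        rwa [show 1 + (n + 1) = n + 2 by omega] at this
      · have := ((LB_homogeneous (B := k) (lam (J - n)) (mu (J - n))).pow 2).mul h0
        rwa [show 1 * 2 + n = n + 2 by omega] at this
  · induction n using Nat.twoStepInduction with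
    | zero => intro u _; simp [hW0]
    | one => rwa [hW1]
    | more n h0 h1 =>
      intro u hu
      rw [hrec]
      exact hc _ _ u hu (by rw [map_mul]; exact mul_ne_zero (hM0 u hu) (h1 u hu))

/-! ### The line joining two forms -/

section Line

/-- The affine line through two forms: `P` at `T = 0` and `P'` at `T = 1`. -/
def line (P P' : MvPolynomial (Fin 2) k) : MvPolynomial (Fin 2) (Polynomial k) :=
  map Polynomial.C P + C Polynomial.X * (map Polynomial.C P' - map Polynomial.C P)

lemma line_homogeneous {P P' : MvPolynomial (Fin 2) k} {d : ℕ} (hP : P.IsHomogeneous d)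
    (hP' : P'.IsHomogeneous d) : (line P P').IsHomogeneous d :=
  (hP.map _).add (((hP'.map _).sub (hP.map _)).C_mul _)

lemma map_line (a : k) (P P' : MvPolynomial (Fin 2) k) :
    map (Polynomial.aeval a : Polynomial k →ₐ[k] k).toRingHom (line P P')
      = P + C a * (P' - P) := by
  have h : ∀ R : MvPolynomial (Fin 2) k,
      map (Polynomial.aeval a : Polynomial k →ₐ[k] k).toRingHom (map Polynomial.C R) = R := by
    intro R
    rw [map_map]
    convert map_id R
    ext x
    simp
  simp only [line, map_add, map_mul, map_sub, h, map_C]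
  simp

lemma map_line_zero (P P' : MvPolynomial (Fin 2) k) :
    map (Polynomial.aeval (0 : k) : Polynomial k →ₐ[k] k).toRingHom (line P P') = P := by
  rw [map_line]
  simp

lemma map_line_one (P P' : MvPolynomial (Fin 2) k) :
    map (Polynomial.aeval (1 : k) : Polynomial k →ₐ[k] k).toRingHom (line P P') = P' := by
  rw [map_line]
  simp

end Line

/-! ### Nondegenerate forms and the scaling formula in general -/

/-- Existence of forms `p`, `l`, `h` for which no division in the evaluated system of `(l, h)`
degenerates. -/
lemma exists_nondegenerate [Infinite k] {J e : ℕ} {lam mu : ℕ → k}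
    (hlm : ∀ u ≤ J, (lam u, mu u) ≠ (0, 0)) {r q : ℕ → MvPolynomial Avars k}
    (hds : IsDivisionSystem k (J + 1) (e + (J + 1)) lam mu J r q) (m : ℕ) :
    ∃ p l h : MvPolynomial (Fin 2) k, p.IsHomogeneous m ∧ l.IsHomogeneous (J + 1) ∧
      h.IsHomogeneous (e + (J + 1)) ∧ (∀ u ≤ J, ptB k (lam u) (mu u) p ≠ 0) ∧
      ptB k (lam 0) (mu 0) l ≠ 0 ∧ ∀ j, j + 1 ≤ J →
        ptB k (lam (j + 1)) (mu (j + 1)) (evB (J + 1) (e + (J + 1)) l h (r j)) ≠ 0 := by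
  obtain ⟨W, hWh, hW0, hWs⟩ := exists_chain_s6 J lam mu hlm
  have hh : (LB k (lam 0) (mu 0) ^ (e + 1) * W J).IsHomogeneous (e + (J + 1)) := by
    have := ((LB_homogeneous (B := k) (lam 0) (mu 0)).pow (e + 1)).mul (hWh J)
    rwa [show 1 * (e + 1) + J = e + (J + 1) by omega] at this
  have hsys := hds.eval (hWh (J + 1)) hh
  rw [show e + (J + 1) - (J + 1) + 1 = e + 1 by omega] at hsys
  have hchain := hsys.eq_chain (S := fun i => W (J - i)) hlm le_rfl (hWh _)
    (fun i hi => by simpa using hWh (J - i)) (hW0 _ 0 (by omega))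
    (fun i _ u hu => hW0 _ u hu) rfl
    (fun hJ => by
      obtain ⟨T, hT⟩ := hWs (J - 1)
      rw [show J - 1 + 2 = J + 1 by omega, show J - 1 + 1 = J by omega,
        show J - (J - 1) = 1 by omega] at hT
      exact ⟨T, hT⟩)
    (fun i hi => by
      obtain ⟨T, hT⟩ := hWs (J - (i + 2))
      rw [show J - (i + 2) + 2 = J - i by omega, show J - (i + 2) + 1 = J - (i + 1) by omega,
        show J - (J - (i + 2)) = i + 2 by omega] at hT
      exact ⟨T, hT⟩)
  refine ⟨W m, W (J + 1), _, hWh m, hWh (J + 1), hh, hW0 m, hW0 _ 0 (by omega), ?_⟩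
  intro j hj
  obtain ⟨c, hc, hcj⟩ := hchain j (by omega)
  rw [hcj, map_mul, ptB_C]
  exact mul_ne_zero hc (hW0 _ _ hj)

end Coeff

/-- Let `1 ≤ K ≤ d₁-1` and `0 ≤ i ≤ K-1`. Let `(r_h, q_h)` be a division
system up to level `K-1` for the degrees `(d₁, d₂)` and `(r̄_h, q̄_h)` a division system up to
level `K-1` for the degrees `(K, d₂-d₁+K)`, both with the same scalars. Then for all binary
forms `p, l, h` of degrees `d₁-K`, `K` and `d₂-d₁+K`, the evaluation of `r_i` at `(p·l, p·h)`
equals `p(λ₀,μ₀)^{d₂-d₁+1} · (∏_{j=1}^{i} p(λ_j,μ_j)²) · p · R̄_i`, where `R̄_i` is the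
evaluation of `r̄_i` at `(l, h)`. -/
theorem statement6 [IsAlgClosed k] (d₁ d₂ : ℕ) (hd₁ : 1 ≤ d₁) (hd : d₁ < d₂)
    (K i : ℕ) (hK1 : 1 ≤ K) (hK2 : K ≤ d₁ - 1) (hi : i ≤ K - 1)
    (lam mu : ℕ → k) (hlm : ∀ u ≤ K - 1, (lam u, mu u) ≠ (0, 0))
    (r q : ℕ → MvPolynomial Avars k)
    (hds : IsDivisionSystem k d₁ d₂ lam mu (K - 1) r q)
    (rbar qbar : ℕ → MvPolynomial Avars k)
    (hdsbar : IsDivisionSystem k K (d₂ - d₁ + K) lam mu (K - 1) rbar qbar)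
    (p l h : MvPolynomial (Fin 2) k)
    (hp : p.IsHomogeneous (d₁ - K)) (hl : l.IsHomogeneous K)
    (hh : h.IsHomogeneous (d₂ - d₁ + K)) :
    evalFG k d₁ d₂ (p * l) (p * h) (r i)
      = C (evalPt k (lam 0) (mu 0) p) ^ (d₂ - d₁ + 1)
        * (∏ j ∈ Finset.Icc 1 i, C (evalPt k (lam j) (mu j) p) ^ 2)
        * p * evalFG k K (d₂ - d₁ + K) l h (rbar i) := by
  obtain ⟨J, rfl⟩ : ∃ J, K = J + 1 := ⟨K - 1, by omega⟩
  simp only [Nat.add_sub_cancel] at hi hlm hds hdsbar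
  have : Infinite k := IsAlgClosed.instInfinite
  obtain ⟨p₀, l₀, h₀, hp₀, hl₀, hh₀, hpne, hlne, hRne⟩ :=
    exists_nondegenerate hlm hdsbar (d₁ - (J + 1))
  -- nonvanishing along the line follows from nonvanishing at `T = 0`
  have hnv : ∀ (u : ℕ) (P : MvPolynomial (Fin 2) (Polynomial k)),
      ptB k (lam u) (mu u) (map (Polynomial.aeval (0 : k)).toRingHom P) ≠ 0 →
      ptB (Polynomial k) (lam u) (mu u) P ≠ 0 := by
    intro u P hP h0
    rw [← map_ptB, h0, map_zero] at hP
    exact hP rfl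
  have hPh := line_homogeneous hp₀ hp
  have hLh := line_homogeneous hl₀ hl
  have hHh := line_homogeneous hh₀ hh
  have hPL := hPh.mul hLh
  have hPH := hPh.mul hHh
  rw [show d₁ - (J + 1) + (J + 1) = d₁ by omega] at hPL
  rw [show d₁ - (J + 1) + (d₂ - d₁ + (J + 1)) = d₂ by omega] at hPH
  have hbar := hdsbar.eval hLh hHh
  rw [show d₂ - d₁ + (J + 1) - (J + 1) + 1 = d₂ - d₁ + 1 by omega] at hbar
  have key := (hds.eval hPL hPH).scaled hlm (by omega) le_rfl hbar hPh hLh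
    (fun u hu => hnv u _ (by rw [map_line_zero]; exact hpne u hu))
    (hnv 0 _ (by rw [map_line_zero]; exact hlne))
    (fun j hj => hnv (j + 1) _ (by
      rw [map_evB, map_line_zero, map_line_zero]
      exact hRne j hj)) i hi
  -- specialization at `T = 1`
  have hpt : ∀ u, (Polynomial.aeval (1 : k)).toRingHom
      (ptB (Polynomial k) (lam u) (mu u) (line p₀ p)) = evalPt k (lam u) (mu u) p := by
    intro u
    have := map_ptB (Polynomial.aeval (1 : k)) (lam u) (mu u) (line p₀ p)
    rw [map_line_one] at this
    exact this
  have key1 := congrArg (map (Polynomial.aeval (1 : k)).toRingHom) key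
  simp only [map_evB, map_mul, map_pow, map_prod, map_C, map_line_one, hpt] at key1
  have hfin : ∀ (e₁ e₂ : ℕ) (F G : MvPolynomial (Fin 2) k) (a : MvPolynomial Avars k),
      evalFG k e₁ e₂ F G a = evB e₁ e₂ F G a := fun _ _ _ _ _ => rfl
  rw [hfin, hfin, key1]
  simp only [mul_assoc]

end
end
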